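/- For every n ≥ 2 and all p ≠ q with 1 ≤ p, q ≤ n, the number of edges of the associahedron graph K_n between the oriented classes Θ_{T_p} and Θ_{T_q} satisfies |E_{p,q}| ≥ |Θ_{T_p}|·|Θ_{T_q}| / C_n, where C_n = |V(K_n)| is the total number of triangulations of the convex (n+2)-gon. -/

import Mathlib

open Finset

/-- `x` lies strictly between `a` and `b` in cyclic (counterclockwise) order
on the vertices `0, 1, …, m-1` of a convex `m`-gon. -/
def CycBtw {m : ℕ} (a b x : Fin m) : Prop :=
  0 < (x - a).val ∧ (x - a).val < (b - a).val

/-- `a` and `b` are adjacent (cyclically consecutive) vertices of the convex `m`-gon. -/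
def PolyAdj {m : ℕ} (a b : Fin m) : Prop :=
  (b - a).val = 1 ∨ (a - b).val = 1

/-- `e` is a side of the convex `m`-gon. -/
def IsSide {m : ℕ} (e : Sym2 (Fin m)) : Prop :=
  ∃ a b : Fin m, e = s(a, b) ∧ PolyAdj a b

/-- `e` is a diagonal of the convex `m`-gon: a pair of distinct non-adjacent vertices. -/
def IsDiagonal {m : ℕ} (e : Sym2 (Fin m)) : Prop :=
  ¬ e.IsDiag ∧ ∀ a b : Fin m, e = s(a, b) → ¬ PolyAdj a b

/-- Two chords cross iff exactly one endpoint of one lies strictly between the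
endpoints of the other (for every representation of the endpoints). -/
def Crosses {m : ℕ} (e f : Sym2 (Fin m)) : Prop :=
  ∀ a b : Fin m, e = s(a, b) →
    ∃ c d : Fin m, f = s(c, d) ∧ Xor' (CycBtw a b c) (CycBtw a b d)

/-- A triangulation of the convex `(n+2)`-gon: a maximal set of pairwise
non-crossing diagonals. -/
def IsTriangulation (n : ℕ) (t : Finset (Sym2 (Fin (n + 2)))) : Prop :=
  (∀ e ∈ t, IsDiagonal e) ∧
  (∀ e ∈ t, ∀ f ∈ t, ¬ Crosses e f) ∧
  (∀ e, IsDiagonal e → (∀ f ∈ t, ¬ Crosses e f) → e ∈ t)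

/-- The type of triangulations of the convex `(n+2)`-gon. -/
def Triangulation (n : ℕ) : Type :=
  {t : Finset (Sym2 (Fin (n + 2))) // IsTriangulation n t}

instance (n : ℕ) : DecidableEq (Triangulation n) := fun a b =>
  decidable_of_iff (a.val = b.val) Subtype.ext_iff.symm

noncomputable instance (n : ℕ) : Fintype (Triangulation n) := by
  classical exact Subtype.fintype _

/-- The associahedron graph `K_n`: vertices are the triangulations of the convex
`(n+2)`-gon, with an edge between two triangulations iff they differ in exactly
one diagonal (a flip). -/
def assocGraph (n : ℕ) : SimpleGraph (Triangulation n) where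
  Adj s t := (s.val \ t.val).card = 1 ∧ (t.val \ s.val).card = 1
  symm := ⟨fun s t h => ⟨h.2, h.1⟩⟩
  loopless := ⟨fun s h => by simp at h⟩

/-- The set of edges of `G` with exactly one endpoint in `S`. -/
def edgeBoundary {V : Type*} (G : SimpleGraph V) (S : Set V) : Set (Sym2 V) :=
  {e | e ∈ G.edgeSet ∧ ∃ u v : V, e = s(u, v) ∧ u ∈ S ∧ v ∉ S}

/-- `e` is an edge of the triangulation `t`: a side of the polygon or one of the
diagonals of `t`. -/
def EdgeOfT {n : ℕ} (t : Triangulation n) (e : Sym2 (Fin (n + 2))) : Prop :=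
  IsSide e ∨ e ∈ t.val

/-- The triangle with vertices `a`, `b`, `c` is one of the `n` triangles of the
triangulation `t` (for pairwise non-crossing sets of diagonals this holds exactly
when all three chords are edges of `t`). -/
def IsTriangleOf {n : ℕ} (t : Triangulation n) (a b c : Fin (n + 2)) : Prop :=
  a ≠ b ∧ b ≠ c ∧ a ≠ c ∧ EdgeOfT t s(a, b) ∧ EdgeOfT t s(b, c) ∧ EdgeOfT t s(a, c)

open scoped Fin.NatCast in
/-- The oriented class `Θ_{T_p}` (w.r.t. the special side `e* = {0, n+1}`): the set of
triangulations of the convex `(n+2)`-gon having the triangle `T_p = {0, p, n+1}` as one of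
their triangles. -/
def orientedClass (n p : ℕ) : Set (Triangulation n) :=
  {t | IsTriangleOf t (0 : Fin (n + 2)) ((p : ℕ) : Fin (n + 2)) (((n + 1 : ℕ)) : Fin (n + 2))}

/-- The set `E_{p,q}` of edges of `K_n` with one endpoint in `Θ_{T_p}` and the other
in `Θ_{T_q}`. -/
def edgesBetween (n p q : ℕ) : Set (Sym2 (Triangulation n)) :=
  {e | e ∈ (assocGraph n).edgeSet ∧
    ∃ u v : Triangulation n, e = s(u, v) ∧ u ∈ orientedClass n p ∧ v ∈ orientedClass n q}

/-- The boundary set `∂_{p,q}`: triangulations in `Θ_{T_p}` having a neighbor in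
`Θ_{T_q}`. -/
def boundarySet (n p q : ℕ) : Set (Triangulation n) :=
  {t | t ∈ orientedClass n p ∧
    ∃ t' : Triangulation n, t' ∈ orientedClass n q ∧ (assocGraph n).Adj t t'}

/-!
Write `t ∈ Θ_p` as a triangulation of the polygon `0, …, p` and one of `p, …, n + 1`, glued along
the triangle `0, p, n + 1`; summing over `p` gives the Catalan recursion, so that
`|Θ_p| = C_{p-1} C_{n-p}`. For `p < q`, if `t` also contains the triangle `p, q, n + 1`, flipping
the diagonal `{p, n + 1}` to `{0, q}` leads to `Θ_q`. There are `C_{p-1} C_{q-p-1} C_{n-q}` such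
`t`, each giving its own edge between the two classes, and the inequality becomes
`C_{q-1} C_{n-p} ≤ C_{q-p-1} C_n`: the log-convexity of the Catalan numbers.
-/

section Chords

variable {α : Type*} [LinearOrder α]

/-- The chords `x` and `y` of a convex polygon, written as increasing pairs of vertices, cross.
Unlike `Crosses` this needs no cyclic order, so it makes sense for vertices in any linear order. -/
def Interlace (x y : α × α) : Prop :=
  x.1 < y.1 ∧ y.1 < x.2 ∧ x.2 < y.2 ∨ y.1 < x.1 ∧ x.1 < y.2 ∧ y.2 < x.2

/-- `F` is the set of all edges of a triangulation of the convex polygon with vertex set `[i, j]`.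
The sides, `(i, j)` included, cross no chord and therefore belong to `F`, so that gluing and
cutting triangulations needs no distinction between sides and diagonals. -/
def IsTriangulationOn (i j : α) (F : Finset (α × α)) : Prop :=
  ∀ x, x ∈ F ↔ i ≤ x.1 ∧ x.1 < x.2 ∧ x.2 ≤ j ∧ ∀ y ∈ F, ¬ Interlace x y

/-- The chords in `F` of the polygon with vertex set `[i, j]`: the piece of a triangulation cut off
by the chord `(i, j)`. -/
def chordsWithin (i j : α) (F : Finset (α × α)) : Finset (α × α) :=
  {x ∈ F | i ≤ x.1 ∧ x.2 ≤ j}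

/-- Triangulations `A` of `[i, p]` and `B` of `[p, j]` joined along the triangle `i, p, j`. -/
def glueChords (i j : α) (A B : Finset (α × α)) : Finset (α × α) :=
  insert (i, j) (A ∪ B)

/-- The exchange of the diagonal `x` for the diagonal `y`. -/
def exchangeChord (F : Finset (α × α)) (x y : α × α) : Finset (α × α) :=
  insert y (F.erase x)

variable {a b c d i j p q : α} {x y z : α × α} {A B F : Finset (α × α)}

theorem Interlace.symm (h : Interlace x y) : Interlace y x :=
  Or.symm h

theorem eq_mk_of_covBy (hij : i ⋖ j) (hi : i ≤ x.1) (hx : x.1 < x.2) (hj : x.2 ≤ j) :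
    x = (i, j) := by
  have := @hij.2 x.1
  have := @hij.2 x.2
  grind

theorem not_interlace_of_covBy (hab : a ⋖ b) : ¬ Interlace (a, b) y := by
  have := hab.2
  unfold Interlace
  grind

theorem not_interlace_of_le (h₁ : a ≤ y.1) (h₂ : y.2 ≤ b) : ¬ Interlace (a, b) y := by
  unfold Interlace
  grind

theorem eq_of_interlace_right_diagonal (hab : a < b) (hbc : b < c) (hx : x.1 < x.2)
    (hxab : ¬ Interlace x (a, b)) (hxbc : ¬ Interlace x (b, c)) (hxcd : ¬ Interlace x (c, d))
    (hxad : ¬ Interlace x (a, d)) (h : Interlace x (b, d)) : x = (a, c) := by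
  unfold Interlace at *
  grind

theorem eq_of_interlace_left_diagonal (hbc : b < c) (hcd : c < d) (hx : x.1 < x.2)
    (hxab : ¬ Interlace x (a, b)) (hxbc : ¬ Interlace x (b, c)) (hxcd : ¬ Interlace x (c, d))
    (hxad : ¬ Interlace x (a, d)) (h : Interlace x (a, c)) : x = (b, d) := by
  unfold Interlace at *
  grind

theorem mem_chordsWithin : x ∈ chordsWithin i j F ↔ x ∈ F ∧ i ≤ x.1 ∧ x.2 ≤ j :=
  mem_filter

theorem mem_glueChords : x ∈ glueChords i j A B ↔ x = (i, j) ∨ x ∈ A ∨ x ∈ B := by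
  simp only [glueChords, mem_insert, mem_union]

theorem mem_exchangeChord : z ∈ exchangeChord F x y ↔ z = y ∨ z ≠ x ∧ z ∈ F := by
  simp only [exchangeChord, mem_insert, mem_erase]

namespace IsTriangulationOn

theorem le_fst (hF : IsTriangulationOn i j F) (hx : x ∈ F) : i ≤ x.1 :=
  ((hF x).1 hx).1

theorem fst_lt_snd (hF : IsTriangulationOn i j F) (hx : x ∈ F) : x.1 < x.2 :=
  ((hF x).1 hx).2.1

theorem snd_le (hF : IsTriangulationOn i j F) (hx : x ∈ F) : x.2 ≤ j :=
  ((hF x).1 hx).2.2.1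

theorem not_interlace (hF : IsTriangulationOn i j F) (hx : x ∈ F) (hy : y ∈ F) :
    ¬ Interlace x y :=
  ((hF x).1 hx).2.2.2 y hy

theorem base_mem (hF : IsTriangulationOn i j F) (hij : i < j) : (i, j) ∈ F :=
  (hF _).2 ⟨le_rfl, hij, le_rfl, fun _ hy => not_interlace_of_le (hF.le_fst hy) (hF.snd_le hy)⟩

theorem side_mem (hF : IsTriangulationOn i j F) (hi : i ≤ a) (hab : a ⋖ b) (hj : b ≤ j) :
    (a, b) ∈ F :=
  (hF _).2 ⟨hi, hab.1, hj, fun _ _ => not_interlace_of_covBy hab⟩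

protected theorem chordsWithin (hF : IsTriangulationOn i j F) (hx : (a, b) ∈ F) :
    IsTriangulationOn a b (chordsWithin a b F) := by
  intro y
  simp only [mem_chordsWithin]
  constructor
  · rintro ⟨hy, hay, hyb⟩
    exact ⟨hay, hF.fst_lt_snd hy, hyb, fun z hz => hF.not_interlace hy hz.1⟩
  · rintro ⟨hay, hy, hyb, hcross⟩
    refine ⟨(hF y).2 ⟨(hF.le_fst hx).trans hay, hy, hyb.trans (hF.snd_le hx), ?_⟩, hay, hyb⟩
    intro z hz hyz
    -- A chord leaving `[a, b]` and crossing `y` would also cross `(a, b)`.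
    have hz_within : a ≤ z.1 ∧ z.2 ≤ b := by
      have := hF.not_interlace hx hz
      unfold Interlace at *
      grind
    exact hcross z ⟨hz, hz_within⟩ hyz

protected theorem glueChords (hA : IsTriangulationOn i p A) (hB : IsTriangulationOn p j B)
    (hip : i < p) (hpj : p < j) : IsTriangulationOn i j (glueChords i j A B) := by
  intro x
  constructor
  · intro hx
    have hbounds : ∀ y ∈ glueChords i j A B, i ≤ y.1 ∧ y.1 < y.2 ∧ y.2 ≤ j := by
      intro y hy
      rcases mem_glueChords.1 hy with rfl | hy | hy
      · exact ⟨le_rfl, hip.trans hpj, le_rfl⟩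
      · exact ⟨hA.le_fst hy, hA.fst_lt_snd hy, (hA.snd_le hy).trans hpj.le⟩
      · exact ⟨hip.le.trans (hB.le_fst hy), hB.fst_lt_snd hy, hB.snd_le hy⟩
    have hseparated : ∀ y ∈ A, ∀ z ∈ B, ¬ Interlace y z := by
      intro y hy z hz
      have := (hA.snd_le hy).trans (hB.le_fst hz)
      unfold Interlace
      grind
    refine ⟨(hbounds x hx).1, (hbounds x hx).2.1, (hbounds x hx).2.2, fun y hy => ?_⟩
    have hxb := hbounds x hx
    have hyb := hbounds y hy
    rcases mem_glueChords.1 hx with rfl | hx | hx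
    · exact not_interlace_of_le hyb.1 hyb.2.2
    all_goals rcases mem_glueChords.1 hy with rfl | hy | hy
    · exact fun h => not_interlace_of_le hxb.1 hxb.2.2 h.symm
    · exact hA.not_interlace hx hy
    · exact hseparated x hx y hy
    · exact fun h => not_interlace_of_le hxb.1 hxb.2.2 h.symm
    · exact fun h => hseparated y hy x hx h.symm
    · exact hB.not_interlace hx hy
  · rintro ⟨hi, hx, hj, hcross⟩
    simp only [mem_glueChords] at hcross ⊢
    by_cases hxp : x.2 ≤ p
    · exact .inr (.inl ((hA x).2 ⟨hi, hx, hxp, fun y hy => hcross y (.inr (.inl hy))⟩))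
    by_cases hpx : p ≤ x.1
    · exact .inr (.inr ((hB x).2 ⟨hpx, hx, hj, fun y hy => hcross y (.inr (.inr hy))⟩))
    -- The only chord over `p` that crosses neither `(i, p)` nor `(p, j)` is `(i, j)`.
    have hxip := hcross _ (.inr (.inl (hA.base_mem hip)))
    have hxpj := hcross _ (.inr (.inr (hB.base_mem hpj)))
    unfold Interlace at hxip hxpj
    grind

theorem chordsWithin_glueChords_left (hA : IsTriangulationOn i p A)
    (hB : IsTriangulationOn p j B) (hpj : p < j) :
    chordsWithin i p (glueChords i j A B) = A := by
  ext x
  have := hA.le_fst (x := x)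
  have := hA.snd_le (x := x)
  have := hB.le_fst (x := x)
  have := hB.fst_lt_snd (x := x)
  grind [mem_chordsWithin, mem_glueChords]

theorem chordsWithin_glueChords_right (hA : IsTriangulationOn i p A)
    (hB : IsTriangulationOn p j B) (hip : i < p) :
    chordsWithin p j (glueChords i j A B) = B := by
  ext x
  have := hA.snd_le (x := x)
  have := hA.fst_lt_snd (x := x)
  have := hB.le_fst (x := x)
  have := hB.snd_le (x := x)
  grind [mem_chordsWithin, mem_glueChords]

theorem glueChords_chordsWithin (hF : IsTriangulationOn i j F) (hip : (i, p) ∈ F)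
    (hpj : (p, j) ∈ F) : glueChords i j (chordsWithin i p F) (chordsWithin p j F) = F := by
  ext x
  have hij := hF.base_mem ((hF.fst_lt_snd hip).trans (hF.fst_lt_snd hpj))
  simp only [mem_glueChords, mem_chordsWithin]
  refine ⟨by grind, fun hx => ?_⟩
  have hipx := hF.not_interlace hip hx
  have hpjx := hF.not_interlace hpj hx
  have := hF.le_fst hx
  have := hF.snd_le hx
  unfold Interlace at hipx hpjx
  grind

theorem exists_apex [LocallyFiniteOrder α] (hF : IsTriangulationOn i j F)
    (hij : (Ioo i j).Nonempty) : ∃ p ∈ Ioo i j, (i, p) ∈ F ∧ (p, j) ∈ F := by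
  obtain ⟨s, his, hsj⟩ : ∃ s, i ⋖ s ∧ s < j := by
    obtain ⟨s, hs, hmin⟩ := exists_min_image (Ioo i j) id hij
    rw [mem_Ioo] at hs
    refine ⟨s, ⟨hs.1, fun r hir hrs => ?_⟩, hs.2⟩
    exact (hmin r (mem_Ioo.2 ⟨hir, hrs.trans hs.2⟩)).not_gt hrs
  -- The apex is the last vertex before `j` joined to `i`.
  obtain ⟨p, hp, hmax⟩ := exists_max_image {p ∈ Ioo i j | (i, p) ∈ F} id
    ⟨s, by simpa using ⟨⟨his.1, hsj⟩, hF.side_mem le_rfl his hsj.le⟩⟩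
  simp only [mem_filter, mem_Ioo, id] at hp hmax
  obtain ⟨⟨hip, hpj⟩, hipF⟩ := hp
  refine ⟨p, mem_Ioo.2 ⟨hip, hpj⟩, hipF, (hF _).2 ⟨hip.le, hpj, le_rfl, fun y hy hcross => ?_⟩⟩
  have hyip := hF.not_interlace hipF hy
  have hiy := hF.le_fst hy
  have hyj := hF.snd_le hy
  unfold Interlace at hcross hyip
  obtain rfl : i = y.1 := by grind
  have := hmax y.2
  grind

theorem apex_unique (hF : IsTriangulationOn i j F) (hip : (i, p) ∈ F) (hpj : (p, j) ∈ F)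
    (hiq : (i, q) ∈ F) (hqj : (q, j) ∈ F) : p = q := by
  have := hF.not_interlace hip hqj
  have := hF.not_interlace hiq hpj
  have := hF.fst_lt_snd hip
  have := hF.fst_lt_snd hpj
  have := hF.fst_lt_snd hiq
  have := hF.fst_lt_snd hqj
  unfold Interlace at *
  grind

theorem not_interlace_left_diagonal (hF : IsTriangulationOn i j F) (hab : (a, b) ∈ F)
    (hbc : (b, c) ∈ F) (hcd : (c, d) ∈ F) (had : (a, d) ∈ F) (hx : x ∈ F) (hxbd : x ≠ (b, d)) :
    ¬ Interlace x (a, c) := fun h =>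
  hxbd <| eq_of_interlace_left_diagonal (hF.fst_lt_snd hbc) (hF.fst_lt_snd hcd) (hF.fst_lt_snd hx)
    (hF.not_interlace hx hab) (hF.not_interlace hx hbc) (hF.not_interlace hx hcd)
    (hF.not_interlace hx had) h

-- Each diagonal of a quadrilateral is the only chord crossing the other diagonal and no side.
protected theorem exchangeChord (hF : IsTriangulationOn i j F) (hab : (a, b) ∈ F)
    (hbc : (b, c) ∈ F) (hcd : (c, d) ∈ F) (had : (a, d) ∈ F) :
    IsTriangulationOn i j (exchangeChord F (b, d) (a, c)) := by
  have hab' : a < b := hF.fst_lt_snd hab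
  have hbc' : b < c := hF.fst_lt_snd hbc
  have hcd' : c < d := hF.fst_lt_snd hcd
  intro x
  simp only [mem_exchangeChord]
  constructor
  · rintro (rfl | ⟨hxbd, hx⟩)
    · refine ⟨hF.le_fst (x := (a, b)) hab, hab'.trans hbc', hF.snd_le (x := (b, c)) hbc, ?_⟩
      rintro y (rfl | ⟨hybd, hy⟩)
      · exact not_interlace_of_le le_rfl le_rfl
      · exact fun h => hF.not_interlace_left_diagonal hab hbc hcd had hy hybd h.symm
    · refine ⟨hF.le_fst hx, hF.fst_lt_snd hx, hF.snd_le hx, ?_⟩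
      rintro y (rfl | ⟨-, hy⟩)
      · exact hF.not_interlace_left_diagonal hab hbc hcd had hx hxbd
      · exact hF.not_interlace hx hy
  · rintro ⟨hi, hx, hj, hcross⟩
    by_cases hxac : x = (a, c)
    · exact .inl hxac
    have hside : ∀ e ∈ F, e ≠ (b, d) → ¬ Interlace x e :=
      fun e he hebd => hcross e (.inr ⟨hebd, he⟩)
    have hxbd : ¬ Interlace x (b, d) := fun h =>
      hxac <| eq_of_interlace_right_diagonal hab' hbc' hx (hside _ hab (by grind))
        (hside _ hbc (by grind)) (hside _ hcd (by grind)) (hside _ had (by grind)) h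
    refine .inr ⟨?_, (hF x).2 ⟨hi, hx, hj, fun y hy => ?_⟩⟩
    · rintro rfl
      exact hcross _ (.inl rfl) (.inr ⟨hab', hbc', hcd'⟩)
    · rcases eq_or_ne y (b, d) with rfl | hybd
      · exact hxbd
      · exact hside y hy hybd

end IsTriangulationOn

variable [LocallyFiniteOrder α]

open Classical in
/-- The triangulations of the convex polygon with vertex set `[i, j]`. -/
noncomputable def triangulationsOn (i j : α) : Finset (Finset (α × α)) :=
  {F ∈ (Icc i j ×ˢ Icc i j).powerset | IsTriangulationOn i j F}

/-- The triangulations of the convex polygon with vertex set `[i, j]` in which `p` is the third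
vertex of the triangle on the side `(i, j)`. -/
noncomputable def triangulationsWithApex (i p j : α) : Finset (Finset (α × α)) :=
  {F ∈ triangulationsOn i j | (i, p) ∈ F ∧ (p, j) ∈ F}

/-- The triangulations of the convex polygon with vertex set `[i, j]` that contain the quadrilateral
`i, p, q, j` divided by its diagonal `(p, j)`. Exchanging this diagonal for `(i, q)` moves the apex
of the triangle on the side `(i, j)` from `p` to `q`. -/
noncomputable def triangulationsWithQuadrilateral (i p q j : α) : Finset (Finset (α × α)) :=
  {F ∈ triangulationsWithApex i p j | (p, q) ∈ F ∧ (q, j) ∈ F}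

theorem mem_triangulationsOn : F ∈ triangulationsOn i j ↔ IsTriangulationOn i j F := by
  simp only [triangulationsOn, mem_filter, mem_powerset, and_iff_right_iff_imp]
  intro hF x hx
  have hlt := hF.fst_lt_snd hx
  simp only [mem_product, mem_Icc]
  exact ⟨⟨hF.le_fst hx, hlt.le.trans (hF.snd_le hx)⟩, (hF.le_fst hx).trans hlt.le, hF.snd_le hx⟩

theorem mem_triangulationsWithApex :
    F ∈ triangulationsWithApex i p j ↔ IsTriangulationOn i j F ∧ (i, p) ∈ F ∧ (p, j) ∈ F := by
  rw [triangulationsWithApex, mem_filter, mem_triangulationsOn]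

theorem mem_triangulationsWithQuadrilateral :
    F ∈ triangulationsWithQuadrilateral i p q j ↔
      (IsTriangulationOn i j F ∧ (i, p) ∈ F ∧ (p, j) ∈ F) ∧ (p, q) ∈ F ∧ (q, j) ∈ F := by
  rw [triangulationsWithQuadrilateral, mem_filter, mem_triangulationsWithApex]

theorem triangulationsWithApex_subset : triangulationsWithApex i p j ⊆ triangulationsOn i j :=
  filter_subset _ _

theorem triangulationsWithQuadrilateral_subset :
    triangulationsWithQuadrilateral i p q j ⊆ triangulationsOn i j :=
  (filter_subset _ _).trans triangulationsWithApex_subset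

theorem disjoint_triangulationsWithApex (hpq : p ≠ q) :
    Disjoint (triangulationsWithApex i p j) (triangulationsWithApex i q j) := by
  rw [disjoint_left]
  intro F hp hq
  rw [mem_triangulationsWithApex] at hp hq
  exact hpq (hp.1.apex_unique hp.2.1 hp.2.2 hq.2.1 hq.2.2)

theorem glueChords_injOn (hip : i < p) (hpj : p < j) :
    Set.InjOn (fun X : Finset (α × α) × Finset (α × α) => glueChords i j X.1 X.2)
      ↑(triangulationsOn i p ×ˢ triangulationsOn p j) := by
  refine Set.LeftInvOn.injOn (f₁' := fun F => (chordsWithin i p F, chordsWithin p j F)) ?_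
  rintro ⟨A, B⟩ hAB
  simp only [coe_product, Set.mem_prod, mem_coe, mem_triangulationsOn] at hAB
  exact Prod.ext (hAB.1.chordsWithin_glueChords_left hAB.2 hpj)
    (hAB.1.chordsWithin_glueChords_right hAB.2 hip)

theorem triangulationsWithApex_eq_image (hip : i < p) (hpj : p < j) :
    triangulationsWithApex i p j = (triangulationsOn i p ×ˢ triangulationsOn p j).image
      fun X => glueChords i j X.1 X.2 := by
  ext F
  simp only [mem_triangulationsWithApex, mem_image, mem_product, mem_triangulationsOn, Prod.exists]
  constructor
  · rintro ⟨hF, hipF, hpjF⟩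
    exact ⟨_, _, ⟨hF.chordsWithin hipF, hF.chordsWithin hpjF⟩, hF.glueChords_chordsWithin hipF hpjF⟩
  · rintro ⟨A, B, ⟨hA, hB⟩, rfl⟩
    exact ⟨hA.glueChords hB hip hpj, mem_glueChords.2 (.inr (.inl (hA.base_mem hip))),
      mem_glueChords.2 (.inr (.inr (hB.base_mem hpj)))⟩

theorem card_triangulationsWithApex (hip : i < p) (hpj : p < j) :
    #(triangulationsWithApex i p j) = #(triangulationsOn i p) * #(triangulationsOn p j) := by
  rw [triangulationsWithApex_eq_image hip hpj, card_image_of_injOn (glueChords_injOn hip hpj),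
    card_product]

theorem triangulationsWithQuadrilateral_eq_image (hip : i < p) (hpj : p < j) :
    triangulationsWithQuadrilateral i p q j =
      (triangulationsOn i p ×ˢ triangulationsWithApex p q j).image
        fun X => glueChords i j X.1 X.2 := by
  ext F
  simp only [mem_triangulationsWithQuadrilateral, mem_image, mem_product, mem_triangulationsOn,
    mem_triangulationsWithApex, Prod.exists]
  constructor
  · rintro ⟨⟨hF, hipF, hpjF⟩, hpq, hqj⟩
    have hpq' := mem_chordsWithin.2 ⟨hpq, le_rfl, (hF.fst_lt_snd hqj).le⟩
    have hqj' := mem_chordsWithin.2 ⟨hqj, (hF.fst_lt_snd hpq).le, le_rfl⟩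
    exact ⟨_, _, ⟨hF.chordsWithin hipF, hF.chordsWithin hpjF, hpq', hqj'⟩,
      hF.glueChords_chordsWithin hipF hpjF⟩
  · rintro ⟨A, B, ⟨hA, hB, hpq, hqj⟩, rfl⟩
    have hleft : A ⊆ glueChords i j A B := fun _ hx => mem_glueChords.2 (.inr (.inl hx))
    have hright : B ⊆ glueChords i j A B := fun _ hx => mem_glueChords.2 (.inr (.inr hx))
    exact ⟨⟨hA.glueChords hB hip hpj, hleft (hA.base_mem hip), hright (hB.base_mem hpj)⟩,
      hright hpq, hright hqj⟩

theorem card_triangulationsWithQuadrilateral (hip : i < p) (hpq : p < q) (hqj : q < j) :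
    #(triangulationsWithQuadrilateral i p q j) =
      #(triangulationsOn i p) * (#(triangulationsOn p q) * #(triangulationsOn q j)) := by
  have hpj := hpq.trans hqj
  have hsub : triangulationsOn i p ×ˢ triangulationsWithApex p q j ⊆
      triangulationsOn i p ×ˢ triangulationsOn p j :=
    product_subset_product_right triangulationsWithApex_subset
  rw [triangulationsWithQuadrilateral_eq_image hip hpj,
    card_image_of_injOn ((glueChords_injOn hip hpj).mono (coe_subset.2 hsub)), card_product,
    card_triangulationsWithApex hpq hqj]

theorem card_triangulationsOn_of_covBy (hij : i ⋖ j) : #(triangulationsOn i j) = 1 := by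
  refine card_eq_one.2 ⟨{(i, j)}, eq_singleton_iff_unique_mem.2 ⟨?_, fun F hF => ?_⟩⟩
  · rw [mem_triangulationsOn]
    intro x
    simp only [mem_singleton, forall_eq]
    constructor
    · rintro rfl
      exact ⟨le_rfl, hij.1, le_rfl, not_interlace_of_covBy hij⟩
    · exact fun ⟨hi, hx, hj, _⟩ => eq_mk_of_covBy hij hi hx hj
  · rw [mem_triangulationsOn] at hF
    exact eq_singleton_iff_unique_mem.2 ⟨hF.base_mem hij.1, fun x hx =>
      eq_mk_of_covBy hij (hF.le_fst hx) (hF.fst_lt_snd hx) (hF.snd_le hx)⟩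

theorem card_triangulationsOn_eq_sum (hij : (Ioo i j).Nonempty) :
    #(triangulationsOn i j) =
      ∑ p ∈ Ioo i j, #(triangulationsOn i p) * #(triangulationsOn p j) := by
  have hunion : triangulationsOn i j = (Ioo i j).biUnion fun p => triangulationsWithApex i p j := by
    ext F
    simp only [mem_biUnion, mem_triangulationsWithApex, mem_triangulationsOn]
    exact ⟨fun hF => (hF.exists_apex hij).imp fun p hp => ⟨hp.1, hF, hp.2⟩,
      fun ⟨_, _, hF, _⟩ => hF⟩
  rw [hunion, card_biUnion fun p _ q _ hpq => disjoint_triangulationsWithApex hpq]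
  exact sum_congr rfl fun p hp =>
    card_triangulationsWithApex (mem_Ioo.1 hp).1 (mem_Ioo.1 hp).2

theorem card_Ioo_add_card_Ioo_add_one (hp : p ∈ Ioo i j) :
    #(Ioo i p) + #(Ioo p j) + 1 = #(Ioo i j) := by
  have hunion : Ioo i j = insert p (Ioo i p ∪ Ioo p j) := by
    ext x
    grind
  rw [hunion, card_insert_of_notMem (by simp), card_union_of_disjoint]
  rw [disjoint_left]
  grind

theorem strictMonoOn_card_Ioo : StrictMonoOn (fun p => #(Ioo i p)) (Ioo i j) := by
  intro p hp q _ hpq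
  have := card_Ioo_add_card_Ioo_add_one (mem_Ioo.2 ⟨(mem_Ioo.1 hp).1, hpq⟩)
  dsimp only
  omega

theorem sum_Ioo_card_eq_sum_antidiagonal {M : Type*} [AddCommMonoid M] (f : ℕ → ℕ → M) {m : ℕ}
    (hm : #(Ioo i j) = m + 1) :
    ∑ p ∈ Ioo i j, f #(Ioo i p) #(Ioo p j) = ∑ x ∈ antidiagonal m, f x.1 x.2 := by
  have hmaps : ∀ p ∈ Ioo i j, (#(Ioo i p), #(Ioo p j)) ∈ antidiagonal m := by
    intro p hp
    have := card_Ioo_add_card_Ioo_add_one hp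
    rw [HasAntidiagonal.mem_antidiagonal]
    omega
  have hinj : Set.InjOn (fun p => (#(Ioo i p), #(Ioo p j))) (Ioo i j) := fun p hp q hq hpq =>
    strictMonoOn_card_Ioo.injOn hp hq (congrArg Prod.fst hpq)
  refine sum_nbij _ hmaps hinj ?_ fun _ _ => rfl
  exact surjOn_of_injOn_of_card_le _ hmaps hinj (by rw [Nat.card_antidiagonal, hm])

theorem card_triangulationsOn (hij : i < j) : #(triangulationsOn i j) = catalan #(Ioo i j) := by
  induction hm : #(Ioo i j) using Nat.strong_induction_on generalizing i j with
  | _ m ih =>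
    rcases m with _ | m
    · have hcov : i ⋖ j := ⟨hij, fun p hip hpj => by
        simpa [card_eq_zero.1 hm] using mem_Ioo.2 ⟨hip, hpj⟩⟩
      rw [card_triangulationsOn_of_covBy hcov, catalan_zero]
    · have hne : (Ioo i j).Nonempty := card_pos.1 (by omega)
      rw [card_triangulationsOn_eq_sum hne, catalan_succ',
        ← sum_Ioo_card_eq_sum_antidiagonal (fun k l => catalan k * catalan l) hm]
      refine sum_congr rfl fun p hp => ?_
      have hcard := card_Ioo_add_card_Ioo_add_one hp
      rw [mem_Ioo] at hp
      rw [ih _ (by omega) hp.1 rfl, ih _ (by omega) hp.2 rfl]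

end Chords

theorem catalan_pos (m : ℕ) : 0 < catalan m :=
  Nat.pos_of_mul_pos_left <| (succ_mul_catalan_eq_centralBinom m).symm ▸ m.centralBinom_pos

theorem add_two_mul_catalan_succ (m : ℕ) :
    (m + 2) * catalan (m + 1) = 2 * (2 * m + 1) * catalan m := by
  refine Nat.eq_of_mul_eq_mul_left m.succ_pos ?_
  calc (m + 1) * ((m + 2) * catalan (m + 1))
      = 2 * (2 * m + 1) * m.centralBinom := by
        rw [succ_mul_catalan_eq_centralBinom (m + 1), Nat.succ_mul_centralBinom_succ]
    _ = (m + 1) * (2 * (2 * m + 1) * catalan m) := by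
        rw [← succ_mul_catalan_eq_centralBinom m]
        ring

-- The ratio `catalan (m + 1) / catalan m = 2 * (2 * m + 1) / (m + 2)` increases with `m`.
theorem catalan_succ_mul_catalan_le {k m : ℕ} (hkm : k ≤ m) :
    catalan (k + 1) * catalan m ≤ catalan k * catalan (m + 1) := by
  have hratio : 2 * (2 * k + 1) * (m + 2) ≤ 2 * (2 * m + 1) * (k + 2) := by linarith
  refine le_of_mul_le_mul_left ?_ (show 0 < (k + 2) * (m + 2) by positivity)
  calc (k + 2) * (m + 2) * (catalan (k + 1) * catalan m)
      = (k + 2) * catalan (k + 1) * ((m + 2) * catalan m) := by ring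
    _ = 2 * (2 * k + 1) * (m + 2) * (catalan k * catalan m) := by
        rw [add_two_mul_catalan_succ]; ring
    _ ≤ 2 * (2 * m + 1) * (k + 2) * (catalan k * catalan m) := Nat.mul_le_mul_right _ hratio
    _ = (k + 2) * catalan k * ((m + 2) * catalan (m + 1)) := by
        rw [add_two_mul_catalan_succ]; ring
    _ = (k + 2) * (m + 2) * (catalan k * catalan (m + 1)) := by ring

theorem catalan_add_mul_catalan_le {k m : ℕ} (hkm : k ≤ m) (d : ℕ) :
    catalan (k + d) * catalan m ≤ catalan k * catalan (m + d) := by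
  induction d with
  | zero => rfl
  | succ d ih =>
    refine le_of_mul_le_mul_left ?_ (catalan_pos (m + d))
    have hstep := catalan_succ_mul_catalan_le (Nat.add_le_add_right hkm d)
    calc catalan (m + d) * (catalan (k + d + 1) * catalan m)
        = catalan (k + d + 1) * catalan (m + d) * catalan m := by ring
      _ ≤ catalan (k + d) * catalan (m + d + 1) * catalan m := Nat.mul_le_mul_right _ hstep
      _ = catalan (k + d) * catalan m * catalan (m + d + 1) := by ring
      _ ≤ catalan k * catalan (m + d) * catalan (m + d + 1) := Nat.mul_le_mul_right _ ih
      _ = catalan (m + d) * (catalan k * catalan (m + d + 1)) := by ring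

section Polygon

variable {m n : ℕ} {F : Finset (Fin (n + 2) × Fin (n + 2))}

theorem exists_lt_eq_mk {α : Type*} [LinearOrder α] {e : Sym2 α} (he : ¬ e.IsDiag) :
    ∃ a b, a < b ∧ e = s(a, b) := by
  induction e with
  | _ a b =>
    rcases lt_or_gt_of_ne (Sym2.mk_isDiag_iff.not.1 he) with hab | hba
    · exact ⟨a, b, hab, rfl⟩
    · exact ⟨b, a, hba, Sym2.eq_swap⟩

theorem cycBtw_iff_of_lt {a b x : Fin m} (hab : a < b) : CycBtw a b x ↔ a < x ∧ x < b := by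
  have hba := Fin.coe_sub_iff_le.2 hab.le
  unfold CycBtw
  rcases le_or_gt a x with hax | hxa
  · have := Fin.coe_sub_iff_le.2 hax
    omega
  · have := Fin.coe_sub_iff_lt.2 hxa
    omega

theorem cycBtw_iff_of_gt {a b x : Fin m} (hab : a < b) : CycBtw b a x ↔ x < a ∨ b < x := by
  have hba := Fin.coe_sub_iff_lt.2 hab
  unfold CycBtw
  rcases le_or_gt b x with hbx | hxb
  · have := Fin.coe_sub_iff_le.2 hbx
    omega
  · have := Fin.coe_sub_iff_lt.2 hxb
    omega

theorem forall_eq_mk_iff {α : Type*} {a b : α} {P : α → α → Prop} :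
    (∀ c d, s(a, b) = s(c, d) → P c d) ↔ P a b ∧ P b a := by
  simp [or_imp, forall_and]

theorem crosses_mk_iff {a b c d : Fin m} :
    Crosses s(a, b) s(c, d) ↔
      Xor (CycBtw a b c) (CycBtw a b d) ∧ Xor (CycBtw b a c) (CycBtw b a d) := by
  have hxor : ∀ a b : Fin m, (∃ c' d', s(c, d) = s(c', d') ∧
      Xor (CycBtw a b c') (CycBtw a b d')) ↔ Xor (CycBtw a b c) (CycBtw a b d) := by
    intro a b
    constructor
    · rintro ⟨c', d', h, hx⟩
      rcases Sym2.eq_iff.1 h with ⟨rfl, rfl⟩ | ⟨rfl, rfl⟩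
      · exact hx
      · exact hx.symm
    · exact fun h => ⟨c, d, rfl, h⟩
  exact (forall₃_congr fun a' b' _ => hxor a' b').trans forall_eq_mk_iff

theorem crosses_iff_interlace {a b c d : Fin m} (hab : a < b) (hcd : c < d) :
    Crosses s(a, b) s(c, d) ↔ Interlace (a, b) (c, d) := by
  simp only [crosses_mk_iff, cycBtw_iff_of_lt hab, cycBtw_iff_of_gt hab, Xor, Interlace]
  omega

theorem isSide_mk {a b : Fin m} : IsSide s(a, b) ↔ PolyAdj a b := by
  unfold IsSide PolyAdj
  grind [Sym2.eq_iff]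

theorem isDiagonal_mk {a b : Fin m} (hab : a < b) : IsDiagonal s(a, b) ↔ ¬ IsSide s(a, b) := by
  simp only [IsDiagonal, IsSide, Sym2.mk_isDiag_iff, hab.ne, not_false_eq_true, true_and,
    not_exists, not_and]

theorem isSide_iff_covBy {a b : Fin (n + 2)} (hab : a < b) :
    IsSide s(a, b) ↔ a ⋖ b ∨ a = 0 ∧ b = Fin.last (n + 1) := by
  have hba := Fin.coe_sub_iff_le.2 hab.le
  have hab' := Fin.coe_sub_iff_lt.2 hab
  rw [isSide_mk, PolyAdj, Fin.covBy_iff, Nat.covBy_iff_add_one_eq, Fin.ext_iff, Fin.ext_iff,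
    Fin.val_last, Fin.val_zero]
  omega

theorem not_interlace_of_isSide {a b : Fin (n + 2)} (hab : a < b) (hside : IsSide s(a, b))
    {y : Fin (n + 2) × Fin (n + 2)} : ¬ Interlace (a, b) y := by
  rcases (isSide_iff_covBy hab).1 hside with hcov | ⟨rfl, rfl⟩
  · exact not_interlace_of_covBy hcov
  · exact not_interlace_of_le (Fin.zero_le _) (Fin.le_last _)

theorem IsTriangulationOn.mem_of_isSide {a b : Fin (n + 2)}
    (hF : IsTriangulationOn 0 (Fin.last (n + 1)) F) (hab : a < b) (hside : IsSide s(a, b)) :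
    (a, b) ∈ F := by
  rcases (isSide_iff_covBy hab).1 hside with hcov | ⟨rfl, rfl⟩
  · exact hF.side_mem (Fin.zero_le _) hcov (Fin.le_last _)
  · exact hF.base_mem hab

open Classical in
/-- The edges of the triangulation `t`, sides included, as increasing pairs of vertices. -/
noncomputable def Triangulation.chords (t : Triangulation n) :
    Finset (Fin (n + 2) × Fin (n + 2)) :=
  {x | x.1 < x.2 ∧ EdgeOfT t s(x.1, x.2)}

open Classical in
/-- The unordered diagonals among the chords `F`, inverting `Triangulation.chords`. -/
noncomputable def diagonalsOf (F : Finset (Fin (n + 2) × Fin (n + 2))) :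
    Finset (Sym2 (Fin (n + 2))) :=
  {e ∈ F.image fun x => s(x.1, x.2) | IsDiagonal e}

theorem mk_mem_diagonalsOf {a b : Fin (n + 2)}
    (hF : ∀ x ∈ F, x.1 < x.2) (hab : a < b) :
    s(a, b) ∈ diagonalsOf F ↔ (a, b) ∈ F ∧ ¬ IsSide s(a, b) := by
  simp only [diagonalsOf, mem_filter, mem_image, isDiagonal_mk hab, Prod.exists, Sym2.eq_iff]
  grind

theorem isDiagonal_of_mem_diagonalsOf
    {e : Sym2 (Fin (n + 2))} (he : e ∈ diagonalsOf F) : IsDiagonal e := by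
  simp only [diagonalsOf, mem_filter] at he
  exact he.2

theorem isTriangulation_diagonalsOf
    (hF : IsTriangulationOn 0 (Fin.last (n + 1)) F) : IsTriangulation n (diagonalsOf F) := by
  have hlt : ∀ x ∈ F, x.1 < x.2 := fun _ => hF.fst_lt_snd
  refine ⟨fun _ => isDiagonal_of_mem_diagonalsOf, fun e he f hf => ?_, fun e he hcross => ?_⟩
  · obtain ⟨a, b, hab, rfl⟩ := exists_lt_eq_mk (isDiagonal_of_mem_diagonalsOf he).1
    obtain ⟨c, d, hcd, rfl⟩ := exists_lt_eq_mk (isDiagonal_of_mem_diagonalsOf hf).1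
    rw [mk_mem_diagonalsOf hlt hab] at he
    rw [mk_mem_diagonalsOf hlt hcd] at hf
    rw [crosses_iff_interlace hab hcd]
    exact hF.not_interlace he.1 hf.1
  · obtain ⟨a, b, hab, rfl⟩ := exists_lt_eq_mk he.1
    rw [isDiagonal_mk hab] at he
    refine (mk_mem_diagonalsOf hlt hab).2
      ⟨(hF _).2 ⟨Fin.zero_le _, hab, Fin.le_last _, fun y hy => ?_⟩, he⟩
    by_cases hside : IsSide s(y.1, y.2)
    · exact fun h => not_interlace_of_isSide (hlt y hy) hside h.symm
    · rw [← crosses_iff_interlace hab (hlt y hy)]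
      exact hcross _ ((mk_mem_diagonalsOf hlt (hlt y hy)).2 ⟨hy, hside⟩)

namespace Triangulation

variable {s t : Triangulation n} {x : Fin (n + 2) × Fin (n + 2)}

theorem mem_chords : x ∈ t.chords ↔ x.1 < x.2 ∧ EdgeOfT t s(x.1, x.2) := by
  simp only [chords, mem_filter, mem_univ, true_and]

theorem isTriangulationOn_chords (t : Triangulation n) :
    IsTriangulationOn 0 (Fin.last (n + 1)) t.chords := by
  obtain ⟨hdiag, hnoncross, hmax⟩ := t.2
  intro x
  constructor
  · intro hx
    obtain ⟨hlt, hedge⟩ := mem_chords.1 hx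
    refine ⟨Fin.zero_le _, hlt, Fin.le_last _, fun y hy => ?_⟩
    obtain ⟨hlt', hedge'⟩ := mem_chords.1 hy
    rcases hedge with hside | hxt
    · exact not_interlace_of_isSide hlt hside
    rcases hedge' with hside | hyt
    · exact fun h => not_interlace_of_isSide hlt' hside h.symm
    rw [← crosses_iff_interlace hlt hlt']
    exact hnoncross _ hxt _ hyt
  · rintro ⟨-, hlt, -, hcross⟩
    refine mem_chords.2 ⟨hlt, or_iff_not_imp_left.2 fun hside => ?_⟩
    refine hmax _ ((isDiagonal_mk hlt).2 hside) fun f hf => ?_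
    obtain ⟨c, d, hcd, rfl⟩ := exists_lt_eq_mk (hdiag f hf).1
    rw [crosses_iff_interlace hlt hcd]
    exact hcross _ (mem_chords.2 ⟨hcd, .inr hf⟩)

theorem exists_chords_eq
    (hF : IsTriangulationOn 0 (Fin.last (n + 1)) F) : ∃ t : Triangulation n, t.chords = F := by
  let t : Triangulation n := ⟨diagonalsOf F, isTriangulation_diagonalsOf hF⟩
  have ht : t.1 = diagonalsOf F := rfl
  refine ⟨t, ?_⟩
  ext x
  rw [mem_chords, EdgeOfT, ht]
  have hmem := mk_mem_diagonalsOf (fun _ => hF.fst_lt_snd) (a := x.1) (b := x.2)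
  have hside := hF.mem_of_isSide (a := x.1) (b := x.2)
  have hlt := hF.fst_lt_snd (x := x)
  grind

theorem mk_mem_sdiff_iff {a b : Fin (n + 2)} (hab : a < b) :
    s(a, b) ∈ s.1 \ t.1 ↔ (a, b) ∈ s.chords \ t.chords := by
  have hs : s(a, b) ∈ s.1 → ¬ IsSide s(a, b) := fun h => (isDiagonal_mk hab).1 (s.2.1 _ h)
  simp only [mem_sdiff, mem_chords, EdgeOfT]
  tauto

theorem image_sdiff_chords :
    (s.chords \ t.chords).image (fun x => s(x.1, x.2)) = s.1 \ t.1 := by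
  ext e
  rw [mem_image]
  constructor
  · rintro ⟨x, hx, rfl⟩
    exact (mk_mem_sdiff_iff (mem_chords.1 (mem_sdiff.1 hx).1).1).2 hx
  · intro he
    obtain ⟨a, b, hab, rfl⟩ := exists_lt_eq_mk (s.2.1 e (mem_sdiff.1 he).1).1
    exact ⟨(a, b), (mk_mem_sdiff_iff hab).1 he, rfl⟩

theorem card_sdiff_chords : #(s.1 \ t.1) = #(s.chords \ t.chords) := by
  rw [← image_sdiff_chords, card_image_of_injOn]
  intro x hx y hy hxy
  have := (mem_chords.1 (mem_sdiff.1 hx).1).1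
  have := (mem_chords.1 (mem_sdiff.1 hy).1).1
  have := Sym2.eq_iff.1 hxy
  grind

theorem chords_injective : Function.Injective (chords (n := n)) := by
  intro s t hst
  have hsub : ∀ {s t : Triangulation n}, s.chords = t.chords → s.1 ⊆ t.1 := by
    intro s t hst
    rw [← sdiff_eq_empty_iff_subset, ← image_sdiff_chords, hst, Finset.sdiff_self, image_empty]
  exact Subtype.ext ((hsub hst).antisymm (hsub hst.symm))

theorem ncard_preimage_chords {𝓕 : Finset (Finset (Fin (n + 2) × Fin (n + 2)))}
    (h𝓕 : 𝓕 ⊆ triangulationsOn 0 (Fin.last (n + 1))) :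
    (chords (n := n) ⁻¹' 𝓕).ncard = #𝓕 := by
  rw [Set.ncard_preimage_of_injective_subset_range chords_injective, Set.ncard_coe_finset]
  exact fun F hF => exists_chords_eq (mem_triangulationsOn.1 (h𝓕 hF))

end Triangulation

theorem assocGraph_adj_of_chords_eq_exchangeChord {s t : Triangulation n}
    {x y : Fin (n + 2) × Fin (n + 2)} (hx : x ∈ s.chords) (hy : y ∉ s.chords)
    (ht : t.chords = exchangeChord s.chords x y) : (assocGraph n).Adj s t := by
  have hxy : x ≠ y := ne_of_mem_of_not_mem hx hy
  constructor
  · rw [Triangulation.card_sdiff_chords, card_eq_one]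
    refine ⟨x, ?_⟩
    ext z
    grind [mem_exchangeChord]
  · rw [Triangulation.card_sdiff_chords, card_eq_one]
    refine ⟨y, ?_⟩
    ext z
    grind [mem_exchangeChord]

theorem card_triangulationsOn_fin {i j : Fin m} (hij : i < j) :
    #(triangulationsOn i j) = catalan (j - i - 1) := by
  rw [card_triangulationsOn hij, Fin.card_Ioo]

theorem card_triangulationsOn_zero {p : Fin (n + 2)} (hp : 0 < p) :
    #(triangulationsOn 0 p) = catalan (p - 1) := by
  rw [card_triangulationsOn_fin hp, Fin.val_zero, Nat.sub_zero]

theorem card_triangulationsOn_last {p : Fin (n + 2)} (hp : p < Fin.last (n + 1)) :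
    #(triangulationsOn p (Fin.last (n + 1))) = catalan (n - p) := by
  rw [card_triangulationsOn_fin hp, Fin.val_last, Nat.sub_right_comm, Nat.add_sub_cancel]

theorem card_triangulation : Nat.card (Triangulation n) = catalan n := by
  have huniv :
      Triangulation.chords (n := n) ⁻¹' ↑(triangulationsOn 0 (Fin.last (n + 1))) = Set.univ :=
    Set.eq_univ_of_forall fun t => mem_triangulationsOn.2 t.isTriangulationOn_chords
  rw [← Set.ncard_univ, ← huniv, Triangulation.ncard_preimage_chords subset_rfl,
    card_triangulationsOn_last Fin.last_pos, Fin.val_zero, Nat.sub_zero]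

variable {p q : Fin (n + 2)}

theorem orientedClass_eq_preimage (hp : 0 < p) (hpn : p < Fin.last (n + 1)) :
    orientedClass n p =
      Triangulation.chords ⁻¹' ↑(triangulationsWithApex 0 p (Fin.last (n + 1))) := by
  ext t
  have hbase := Triangulation.mem_chords.1 (t.isTriangulationOn_chords.base_mem (hp.trans hpn))
  simp only [orientedClass, IsTriangleOf, Set.mem_ofPred_eq, Set.mem_preimage, mem_coe,
    mem_triangulationsWithApex, Triangulation.mem_chords, Fin.cast_val_eq_self,
    Fin.natCast_eq_last]
  have := t.isTriangulationOn_chords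
  have := hp.ne
  have := hpn.ne
  have := hbase.1.ne
  tauto

theorem ncard_orientedClass (hp : 0 < p) (hpn : p < Fin.last (n + 1)) :
    (orientedClass n p).ncard = catalan (p - 1) * catalan (n - p) := by
  rw [orientedClass_eq_preimage hp hpn,
    Triangulation.ncard_preimage_chords triangulationsWithApex_subset,
    card_triangulationsWithApex hp hpn, card_triangulationsOn_zero hp,
    card_triangulationsOn_last hpn]

theorem disjoint_orientedClass (hp : 0 < p) (hpn : p < Fin.last (n + 1)) (hq : 0 < q)
    (hqn : q < Fin.last (n + 1)) (hpq : p ≠ q) :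
    Disjoint (orientedClass n p) (orientedClass n q) := by
  rw [orientedClass_eq_preimage hp hpn, orientedClass_eq_preimage hq hqn]
  exact (disjoint_coe.2 (disjoint_triangulationsWithApex hpq)).preimage _

theorem ncard_boundarySet_le_ncard_edgesBetween {p q : ℕ}
    (hdisj : Disjoint (orientedClass n p) (orientedClass n q)) :
    (boundarySet n p q).ncard ≤ (edgesBetween n p q).ncard := by
  have : Nonempty (Triangulation n) :=
    (Nat.card_pos_iff.1 (card_triangulation (n := n) ▸ catalan_pos n)).1
  choose! f hf hadj using fun t (ht : t ∈ boundarySet n p q) => ht.2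
  refine Set.ncard_le_ncard_of_injOn (fun t => s(t, f t))
    (fun t ht => ⟨hadj t ht, t, f t, rfl, ht.1, hf t ht⟩) ?_ (Set.toFinite _)
  intro s hs t ht hst
  rcases Sym2.eq_iff.1 hst with ⟨h, -⟩ | ⟨h, -⟩
  · exact h
  · exact absurd (h ▸ hf t ht) (Set.disjoint_left.1 hdisj hs.1)

theorem preimage_triangulationsWithQuadrilateral_subset_boundarySet :
    Triangulation.chords ⁻¹' ↑(triangulationsWithQuadrilateral 0 p q (Fin.last (n + 1))) ⊆
      boundarySet n p q := by
  intro t ht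
  obtain ⟨⟨hF, h0p, hplast⟩, hpq, hqlast⟩ := mem_triangulationsWithQuadrilateral.1 ht
  have hp : 0 < p := hF.fst_lt_snd h0p
  have hpq' : p < q := hF.fst_lt_snd hpq
  have hqn : q < Fin.last (n + 1) := hF.fst_lt_snd hqlast
  have hpn := hpq'.trans hqn
  obtain ⟨s, hs⟩ := Triangulation.exists_chords_eq <|
    hF.exchangeChord h0p hpq hqlast (hF.base_mem (hp.trans hpn))
  have h0q : (0, q) ∉ t.chords := fun h => hF.not_interlace h hplast (.inl ⟨hp, hpq', hqn⟩)
  refine ⟨?_, s, ?_, assocGraph_adj_of_chords_eq_exchangeChord hplast h0q hs⟩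
  · rw [orientedClass_eq_preimage hp hpn]
    exact mem_triangulationsWithApex.2 ⟨hF, h0p, hplast⟩
  · rw [orientedClass_eq_preimage (hp.trans hpq') hqn]
    refine mem_triangulationsWithApex.2 ⟨s.isTriangulationOn_chords, ?_, ?_⟩
    · exact hs ▸ mem_exchangeChord.2 (.inl rfl)
    · exact hs ▸ mem_exchangeChord.2 (.inr ⟨by grind, hqlast⟩)

theorem edgesBetween_comm (n p q : ℕ) : edgesBetween n p q = edgesBetween n q p := by
  have hsub : ∀ p q, edgesBetween n p q ⊆ edgesBetween n q p :=
    fun p q e ⟨he, u, v, huv, hu, hv⟩ => ⟨he, v, u, huv.trans Sym2.eq_swap, hv, hu⟩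
  exact (hsub p q).antisymm (hsub q p)

theorem catalan_mul_le_ncard_edgesBetween (hp : 0 < p) (hpq : p < q)
    (hqn : q < Fin.last (n + 1)) :
    catalan (p - 1) * (catalan (q - p - 1) * catalan (n - q)) ≤ (edgesBetween n p q).ncard := by
  have hdisj := disjoint_orientedClass hp (hpq.trans hqn) (hp.trans hpq) hqn hpq.ne
  calc catalan (p - 1) * (catalan (q - p - 1) * catalan (n - q))
      = #(triangulationsWithQuadrilateral 0 p q (Fin.last (n + 1))) := by
        rw [card_triangulationsWithQuadrilateral hp hpq hqn, card_triangulationsOn_zero hp,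
          card_triangulationsOn_fin hpq, card_triangulationsOn_last hqn]
    _ = (Triangulation.chords ⁻¹'
          ↑(triangulationsWithQuadrilateral 0 p q (Fin.last (n + 1)))).ncard :=
        (Triangulation.ncard_preimage_chords triangulationsWithQuadrilateral_subset).symm
    _ ≤ (boundarySet n p q).ncard :=
        Set.ncard_le_ncard preimage_triangulationsWithQuadrilateral_subset_boundarySet
          (Set.toFinite _)
    _ ≤ (edgesBetween n p q).ncard := ncard_boundarySet_le_ncard_edgesBetween hdisj

theorem ncard_orientedClass_mul_le (hp : 0 < p) (hpq : p < q) (hqn : q < Fin.last (n + 1)) :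
    (orientedClass n p).ncard * (orientedClass n q).ncard ≤
      (edgesBetween n p q).ncard * Nat.card (Triangulation n) := by
  have hn : (q : ℕ) ≤ n := Nat.lt_succ_iff.1 hqn
  have hcatalan : catalan (q - 1) * catalan (n - p) ≤ catalan (q - p - 1) * catalan n := by
    have h := catalan_add_mul_catalan_le (show (q - p - 1 : ℕ) ≤ n - p by omega) p
    rwa [show (q - p - 1 + p : ℕ) = q - 1 by omega, show (n - p + p : ℕ) = n by omega] at h
  rw [ncard_orientedClass hp (hpq.trans hqn), ncard_orientedClass (hp.trans hpq) hqn,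
    card_triangulation]
  calc catalan (p - 1) * catalan (n - p) * (catalan (q - 1) * catalan (n - q))
      = catalan (p - 1) * catalan (n - q) * (catalan (q - 1) * catalan (n - p)) := by ring
    _ ≤ catalan (p - 1) * catalan (n - q) * (catalan (q - p - 1) * catalan n) :=
        Nat.mul_le_mul_left _ hcatalan
    _ = catalan (p - 1) * (catalan (q - p - 1) * catalan (n - q)) * catalan n := by ring
    _ ≤ (edgesBetween n p q).ncard * catalan n :=
        Nat.mul_le_mul_right _ (catalan_mul_le_ncard_edgesBetween hp hpq hqn)

end Polygon

/-- for every `n ≥ 2` and all `p ≠ q` with `1 ≤ p, q ≤ n`, the number of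
edges of `K_n` between `Θ_{T_p}` and `Θ_{T_q}` is at least `|Θ_{T_p}|·|Θ_{T_q}|/C_n`,
where `C_n = |V(K_n)|` is the number of triangulations of the convex `(n+2)`-gon. -/
theorem edgesBetween_card_lower_bound (n p q : ℕ) (hn : 2 ≤ n) (hp : 1 ≤ p) (hpn : p ≤ n)
    (hq : 1 ≤ q) (hqn : q ≤ n) (hpq : p ≠ q) :
    ((orientedClass n p).ncard : ℝ) * ((orientedClass n q).ncard : ℝ) /
        (Nat.card (Triangulation n) : ℝ) ≤
      ((edgesBetween n p q).ncard : ℝ) := by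
  have hcard : (0 : ℝ) < Nat.card (Triangulation n) := by
    rw [card_triangulation]
    exact_mod_cast catalan_pos n
  have hmul : (orientedClass n p).ncard * (orientedClass n q).ncard ≤
      (edgesBetween n p q).ncard * Nat.card (Triangulation n) := by
    rcases hpq.lt_or_gt with hlt | hgt
    · exact ncard_orientedClass_mul_le (p := ⟨p, by omega⟩) (q := ⟨q, by omega⟩) hp hlt
        (Nat.lt_succ_of_le hqn)
    · rw [mul_comm (orientedClass n p).ncard, edgesBetween_comm]
      exact ncard_orientedClass_mul_le (p := ⟨q, by omega⟩) (q := ⟨p, by omega⟩) hq hgt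
        (Nat.lt_succ_of_le hpn)
  rw [div_le_iff₀ hcard]
  exact_mod_cast hmul
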